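/- arXiv:2202.08534 — 4 statements merged into one kernel-verified Lean document; each statement's English description precedes it below -/
import Mathlib

section
/- Let (x₀,x₁,p₀,p₁) : I → (0,∞) × ℝ × ℝ² be a solution of Hamilton's equations for the isosceles three-body Hamiltonian with outer mass m > 0. Define (r, ψ, v, w) by the blowup formulas and reparametrize time by dt/dτ = r^{3/2}. Then, as functions of the new time τ, the blowup variables satisfy dr/dτ = r v, dv/dτ = w² + v²/2 + V̄(ψ), dψ/dτ = w, and dw/dτ = −(1/2) v w − V̄′(ψ), where V̄(ψ) = −1/(√2 cos ψ) − 4m/√(2cos²ψ + (2(2+m)/m) sin²ψ). -/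
open Filter Set Topology

/-- Reduced mass `M₀ = 1/2` of the binary. -/
noncomputable def M0 : ℝ := 1/2

/-- Reduced mass `M₁ = 2m/(m+2)` of the outer body relative to the binary. -/
noncomputable def M1 (m : ℝ) : ℝ := 2*m/(m+2)

/-- The potential of the isosceles three-body problem with outer mass `m`. -/
noncomputable def i3bpPot (m x0 x1 : ℝ) : ℝ :=
  -1/x0 - 2*m/Real.sqrt (x1^2 + x0^2/4)

/-- `(x0, x1, p0, p1)` solves Hamilton's equations for the isosceles three-body
Hamiltonian `H = p₀²/(2M₀) + p₁²/(2M₁) + pot` on the set `s`. -/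
def IsI3BPSolutionOn (m : ℝ) (x0 x1 p0 p1 : ℝ → ℝ) (s : Set ℝ) : Prop :=
  ∀ t ∈ s,
    HasDerivAt x0 (p0 t / M0) t ∧
    HasDerivAt x1 (p1 t / M1 m) t ∧
    HasDerivAt p0 (-(deriv (fun y => i3bpPot m y (x1 t)) (x0 t))) t ∧
    HasDerivAt p1 (-(deriv (fun y => i3bpPot m (x0 t) y) (x1 t))) t

/-- The rescaled potential `V̄` of the isosceles three-body problem. -/
noncomputable def Vbar (m ψ : ℝ) : ℝ :=
  -1/(Real.sqrt 2 * Real.cos ψ)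
    - 4*m/Real.sqrt (2*Real.cos ψ^2 + (2*(2+m)/m)*Real.sin ψ^2)

/-- Blowup coordinate `r`. -/
noncomputable def bR (m x0 x1 : ℝ) : ℝ := Real.sqrt (M0*x0^2 + M1 m*x1^2)

/-- Blowup coordinate `ψ`. -/
noncomputable def bPsi (m x0 x1 : ℝ) : ℝ :=
  Real.arctan (Real.sqrt (M1 m) * x1 / (Real.sqrt M0 * x0))

/-- Blowup coordinate `v`. -/
noncomputable def bV (m x0 x1 p0 p1 : ℝ) : ℝ :=
  (bR m x0 x1) ^ (-(1:ℝ)/2) * (x0*p0 + x1*p1)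

/-- Blowup coordinate `w`. -/
noncomputable def bW (m x0 x1 p0 p1 : ℝ) : ℝ :=
  (bR m x0 x1) ^ (-(1:ℝ)/2) *
    (Real.sqrt (M0 / M1 m) * x0 * p1 - Real.sqrt (M1 m / M0) * x1 * p0)

/-!
In the mass-scaled plane `ℂ` the problem is Newton's equation `q̈ = -∇U(q)` for a potential of
degree `-1`, and the blowup variables are `r = ‖q‖`, `ψ = arg q` and `v + i w = ζ` with
`ζ = r ^ (-1/2) q̄ p`. In the time `τ` one gets `dq/dτ = ζ q`, hence `d(log q)/dτ = ζ`, whose real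
and imaginary parts are the equations for `r` and `ψ`. The product rule gives
`dζ/dτ = -v ζ / 2 + |ζ|² - r q̄ ∇U(q)`. Here `Re (r q̄ ∇U(q)) = -V̄(ψ)` by Euler's identity, and
`Im (r q̄ ∇U(q)) = V̄'(ψ)` because `V̄` is `U` restricted to the unit circle.
-/

open scoped ComplexConjugate Gradient RealInnerProductSpace

/-- Positive homogeneity of real degree `d`, with no condition on how `U` scales by `c ≤ 0`. -/
def PosHomogeneous {E : Type*} [SMul ℝ E] (d : ℝ) (U : E → ℝ) : Prop :=
  ∀ ⦃c : ℝ⦄, 0 < c → ∀ x, U (c • x) = c ^ d * U x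

/-- The restriction of `U` to the unit circle, as a function of the angle. -/
noncomputable def circleRestriction (U : ℂ → ℝ) (θ : ℝ) : ℝ := U (Complex.exp (θ * Complex.I))

/-- McGehee's rescaled velocity `v + i w` for a potential of degree `-α`: its real part is the
radial and its imaginary part the angular component of `p` at `q`, multiplied by `‖q‖ ^ (α / 2)`. -/
noncomputable def blowupVelocity (α : ℝ) (q p : ℂ) : ℂ := ‖q‖ ^ (α / 2 - 1) • (conj q * p)

section Homogeneous

theorem PosHomogeneous.fderiv_apply_self {E : Type*} [NormedAddCommGroup E] [NormedSpace ℝ E]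
    {d : ℝ} {U : E → ℝ} {x : E} (hU : PosHomogeneous d U) (hd : DifferentiableAt ℝ U x) :
    fderiv ℝ U x x = d * U x := by
  have hd' : HasFDerivAt U (fderiv ℝ U x) ((1 : ℝ) • x) := by simpa using hd.hasFDerivAt
  have along_ray : HasDerivAt (fun c : ℝ ↦ U (c • x)) (fderiv ℝ U x x) 1 := by
    simpa using! hd'.comp_hasDerivAt 1 ((hasDerivAt_id (1 : ℝ)).smul_const x)
  have power : HasDerivAt (fun c : ℝ ↦ c ^ d * U x) (d * U x) 1 := by
    simpa using (Real.hasDerivAt_rpow_const (p := d) (Or.inl one_ne_zero)).mul_const (U x)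
  refine along_ray.unique (power.congr_of_eventuallyEq ?_)
  filter_upwards [lt_mem_nhds zero_lt_one] with c hc using hU hc x

variable {α : ℝ} {U : ℂ → ℝ} {q : ℂ}

theorem PosHomogeneous.circleRestriction_eq (hU : PosHomogeneous (-α) U) {r : ℝ} (hr : 0 < r)
    (θ : ℝ) : circleRestriction U θ = r ^ α * U (r * Complex.exp (θ * Complex.I)) := by
  rw [circleRestriction, ← Complex.real_smul (x := r), hU hr, ← mul_assoc, ← Real.rpow_add hr,
    add_neg_cancel, Real.rpow_zero, one_mul]

theorem PosHomogeneous.circleRestriction_arg (hU : PosHomogeneous (-α) U) (hq : q ≠ 0) :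
    circleRestriction U q.arg = ‖q‖ ^ α * U q := by
  rw [hU.circleRestriction_eq (norm_pos_iff.2 hq), Complex.norm_mul_exp_arg_mul_I]

theorem PosHomogeneous.re_conj_mul_gradient (hU : PosHomogeneous (-α) U) (hq : q ≠ 0)
    (hd : DifferentiableAt ℝ U q) :
    ‖q‖ ^ α * (conj q * ∇ U q).re = -α * circleRestriction U q.arg := by
  have euler : (conj q * ∇ U q).re = -α * U q := by
    rw [← hU.fderiv_apply_self hd, ← inner_gradient_left, real_inner_comm, Complex.inner, mul_comm]
  rw [euler, hU.circleRestriction_arg hq]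
  ring

theorem PosHomogeneous.hasDerivAt_circleRestriction (hU : PosHomogeneous (-α) U) (hq : q ≠ 0)
    (hd : DifferentiableAt ℝ U q) :
    HasDerivAt (circleRestriction U) (‖q‖ ^ α * (conj q * ∇ U q).im) q.arg := by
  have rotation : HasDerivAt (fun θ : ℝ ↦ ‖q‖ * Complex.exp (θ * Complex.I))
      (q * Complex.I) q.arg := by
    refine ((((hasDerivAt_id q.arg).ofReal_comp.mul_const Complex.I).cexp).const_mul
      (‖q‖ : ℂ)).congr_deriv ?_
    rw [← mul_assoc, id_eq, Complex.norm_mul_exp_arg_mul_I, Complex.ofReal_one, one_mul]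
  have hd' : HasFDerivAt U (fderiv ℝ U q) ((‖q‖ : ℂ) * Complex.exp (q.arg * Complex.I)) := by
    rw [Complex.norm_mul_exp_arg_mul_I]
    exact hd.hasFDerivAt
  rw [funext (hU.circleRestriction_eq (norm_pos_iff.2 hq))]
  refine ((hd'.comp_hasDerivAt q.arg rotation).const_mul (‖q‖ ^ α)).congr_deriv ?_
  rw [← inner_gradient_left, Complex.inner]
  simp only [Complex.mul_re, Complex.mul_im, Complex.conj_re, Complex.conj_im, Complex.I_re,
    Complex.I_im]
  ring

end Homogeneous

section Blowup

theorem rpow_smul_eq_blowupVelocity_mul (α : ℝ) {q : ℂ} (hq : q ≠ 0) (p : ℂ) :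
    ‖q‖ ^ (1 + α / 2) • p = blowupVelocity α q p * q := by
  have hpow : ‖q‖ ^ (1 + α / 2) = ‖q‖ ^ (α / 2 - 1) * ‖q‖ ^ 2 := by
    rw [← Real.rpow_two, ← Real.rpow_add (norm_pos_iff.2 hq)]
    ring_nf
  simp only [blowupVelocity, hpow, Complex.real_smul, Complex.ofReal_mul, Complex.ofReal_pow,
    ← Complex.conj_mul']
  ring

variable {α τ : ℝ} {q p : ℝ → ℂ} {F : ℂ}

theorem hasDerivAt_norm_blowup (hq₀ : q τ ≠ 0)
    (hq : HasDerivAt q (‖q τ‖ ^ (1 + α / 2) • p τ) τ) :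
    HasDerivAt (fun s ↦ ‖q s‖) (‖q τ‖ * (blowupVelocity α (q τ) (p τ)).re) τ := by
  have hr : 0 < ‖q τ‖ := norm_pos_iff.2 hq₀
  rw [rpow_smul_eq_blowupVelocity_mul α hq₀] at hq
  have hsqrt := hq.norm_sq.sqrt (pow_ne_zero 2 hr.ne')
  simp only [Real.sqrt_sq (norm_nonneg _)] at hsqrt
  refine hsqrt.congr_deriv ?_
  rw [Complex.inner, mul_assoc, Complex.mul_conj', ← Complex.ofReal_pow, Complex.re_mul_ofReal]
  field_simp

theorem hasDerivAt_arg_blowup (hq₀ : q τ ∈ Complex.slitPlane)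
    (hq : HasDerivAt q (‖q τ‖ ^ (1 + α / 2) • p τ) τ) :
    HasDerivAt (fun s ↦ (q s).arg) (blowupVelocity α (q τ) (p τ)).im τ := by
  have hne : q τ ≠ 0 := Complex.slitPlane_ne_zero hq₀
  rw [rpow_smul_eq_blowupVelocity_mul α hne] at hq
  have hlog : HasDerivAt (fun s ↦ Complex.log (q s)) (blowupVelocity α (q τ) (p τ)) τ := by
    simpa only [mul_div_cancel_right₀ _ hne] using hq.clog_real hq₀
  simpa only [Function.comp_def, Complex.imCLM_apply, Complex.log_im] using
    Complex.imCLM.hasFDerivAt.comp_hasDerivAt τ hlog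

theorem hasDerivAt_blowupVelocity (hq₀ : q τ ≠ 0)
    (hq : HasDerivAt q (‖q τ‖ ^ (1 + α / 2) • p τ) τ)
    (hp : HasDerivAt p (‖q τ‖ ^ (1 + α / 2) • F) τ) :
    HasDerivAt (fun s ↦ blowupVelocity α (q s) (p s))
      (((α / 2 - 1) * (blowupVelocity α (q τ) (p τ)).re) • blowupVelocity α (q τ) (p τ)
        + (‖blowupVelocity α (q τ) (p τ)‖ ^ 2 : ℝ) + ‖q τ‖ ^ α • (conj (q τ) * F)) τ := by
  have hr : 0 < ‖q τ‖ := norm_pos_iff.2 hq₀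
  have hs := (hasDerivAt_norm_blowup hq₀ hq).rpow_const (p := α / 2 - 1) (Or.inl hr.ne')
  rw [rpow_smul_eq_blowupVelocity_mul α hq₀] at hq
  refine (hs.smul (hq.star.mul hp)).congr_deriv ?_
  set ζ := blowupVelocity α (q τ) (p τ)
  have hpow : ‖q τ‖ * ‖q τ‖ ^ (α / 2 - 1 - 1) = ‖q τ‖ ^ (α / 2 - 1) := by
    rw [Real.rpow_sub_one hr.ne' (α / 2 - 1)]
    field_simp
  have scaling_term : (‖q τ‖ * ζ.re * (α / 2 - 1) * ‖q τ‖ ^ (α / 2 - 1 - 1)) •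
      (conj (q τ) * p τ) = ((α / 2 - 1) * ζ.re) • ζ := by
    rw [show ‖q τ‖ * ζ.re * (α / 2 - 1) * ‖q τ‖ ^ (α / 2 - 1 - 1)
      = (α / 2 - 1) * ζ.re * ‖q τ‖ ^ (α / 2 - 1) by rw [← hpow]; ring, mul_smul]
    rfl
  have kinetic_term : ‖q τ‖ ^ (α / 2 - 1) • (conj (ζ * q τ) * p τ) = (‖ζ‖ ^ 2 : ℝ) := by
    rw [Complex.ofReal_pow, ← Complex.conj_mul', map_mul, mul_assoc, ← mul_smul_comm]
    rfl
  have force_term : ‖q τ‖ ^ (α / 2 - 1) • (conj (q τ) * ‖q τ‖ ^ (1 + α / 2) • F)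
      = ‖q τ‖ ^ α • (conj (q τ) * F) := by
    rw [mul_smul_comm, smul_smul, ← Real.rpow_add hr]
    ring_nf
  rw [← scaling_term, ← kinetic_term, ← force_term]
  simp only [smul_add, starRingEnd_apply]
  abel

end Blowup

section Newton

variable {α τ : ℝ} {U : ℂ → ℝ} {q p : ℝ → ℂ}

theorem PosHomogeneous.hasDerivAt_re_blowupVelocity (hU : PosHomogeneous (-α) U) (hq₀ : q τ ≠ 0)
    (hd : DifferentiableAt ℝ U (q τ)) (hq : HasDerivAt q (‖q τ‖ ^ (1 + α / 2) • p τ) τ)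
    (hp : HasDerivAt p (‖q τ‖ ^ (1 + α / 2) • -∇ U (q τ)) τ) :
    HasDerivAt (fun s ↦ (blowupVelocity α (q s) (p s)).re)
      ((blowupVelocity α (q τ) (p τ)).im ^ 2 + α / 2 * (blowupVelocity α (q τ) (p τ)).re ^ 2
        + α * circleRestriction U (q τ).arg) τ := by
  refine (Complex.reCLM.hasFDerivAt.comp_hasDerivAt τ
    (hasDerivAt_blowupVelocity hq₀ hq hp)).congr_deriv ?_
  have radial := hU.re_conj_mul_gradient hq₀ hd
  simp only [Complex.reCLM_apply, Complex.add_re, Complex.smul_re, Complex.ofReal_re, smul_eq_mul,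
    mul_neg, Complex.neg_re, radial, Complex.sq_norm, Complex.normSq_apply]
  ring

theorem PosHomogeneous.hasDerivAt_im_blowupVelocity (hU : PosHomogeneous (-α) U) (hq₀ : q τ ≠ 0)
    (hd : DifferentiableAt ℝ U (q τ)) (hq : HasDerivAt q (‖q τ‖ ^ (1 + α / 2) • p τ) τ)
    (hp : HasDerivAt p (‖q τ‖ ^ (1 + α / 2) • -∇ U (q τ)) τ) :
    HasDerivAt (fun s ↦ (blowupVelocity α (q s) (p s)).im)
      ((α / 2 - 1) * (blowupVelocity α (q τ) (p τ)).re * (blowupVelocity α (q τ) (p τ)).im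
        - deriv (circleRestriction U) (q τ).arg) τ := by
  refine (Complex.imCLM.hasFDerivAt.comp_hasDerivAt τ
    (hasDerivAt_blowupVelocity hq₀ hq hp)).congr_deriv ?_
  rw [(hU.hasDerivAt_circleRestriction hq₀ hd).deriv]
  simp only [Complex.imCLM_apply, Complex.add_im, Complex.smul_im, Complex.ofReal_im, smul_eq_mul,
    mul_neg, Complex.neg_im]
  ring

end Newton

section Gradient

theorem hasDerivAt_complex_mk {f g : ℝ → ℝ} {f' g' t : ℝ} (hf : HasDerivAt f f' t)
    (hg : HasDerivAt g g' t) : HasDerivAt (fun s ↦ (⟨f s, g s⟩ : ℂ)) ⟨f', g'⟩ t := by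
  simpa only [Complex.mk_eq_add_mul_I] using!
    hf.ofReal_comp.add (hg.ofReal_comp.mul_const Complex.I)

theorem gradient_eq_partial_derivs {U : ℂ → ℝ} {z : ℂ} (hd : DifferentiableAt ℝ U z) :
    ∇ U z = ⟨deriv (fun x ↦ U ⟨x, z.im⟩) z.re, deriv (fun y ↦ U ⟨z.re, y⟩) z.im⟩ := by
  have hU : HasFDerivAt U (fderiv ℝ U z) ⟨z.re, z.im⟩ := hd.hasFDerivAt
  have horizontal := hU.comp_hasDerivAt z.re
    (hasDerivAt_complex_mk (hasDerivAt_id z.re) (hasDerivAt_const z.re z.im))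
  have vertical := hU.comp_hasDerivAt z.im
    (hasDerivAt_complex_mk (hasDerivAt_const z.im z.re) (hasDerivAt_id z.im))
  rw [← inner_gradient_left, Complex.inner] at horizontal vertical
  apply Complex.ext
  · simpa using! horizontal.deriv.symm
  · simpa using! vertical.deriv.symm

end Gradient

section IsoscelesThreeBody

/-- The Jacobi position in mass-scaled coordinates, in which the kinetic metric is Euclidean;
the plane is identified with `ℂ` so that `bR` and `bPsi` become modulus and argument. -/
noncomputable def massScaledPosition (m x0 x1 : ℝ) : ℂ := ⟨√M0 * x0, √(M1 m) * x1⟩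

/-- The momentum conjugate to `massScaledPosition`; it is also the velocity in these
coordinates. -/
noncomputable def massScaledMomentum (m p0 p1 : ℝ) : ℂ := ⟨p0 / √M0, p1 / √(M1 m)⟩

/-- The potential `i3bpPot` as a function of the mass-scaled position. -/
noncomputable def massScaledPot (m : ℝ) (z : ℂ) : ℝ := i3bpPot m (z.re / √M0) (z.im / √(M1 m))

theorem M0_pos : 0 < M0 := by norm_num [M0]

theorem M1_pos {m : ℝ} (hm : 0 < m) : 0 < M1 m := by
  unfold M1
  positivity

variable {m : ℝ}

theorem massScaledPosition_re_pos {x0 : ℝ} (hx0 : 0 < x0) (x1 : ℝ) :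
    0 < (massScaledPosition m x0 x1).re :=
  mul_pos (Real.sqrt_pos.2 M0_pos) hx0

theorem massScaledPosition_mem_slitPlane {x0 : ℝ} (hx0 : 0 < x0) (x1 : ℝ) :
    massScaledPosition m x0 x1 ∈ Complex.slitPlane :=
  Or.inl (massScaledPosition_re_pos hx0 x1)

theorem bR_eq_norm (hm : 0 < m) (x0 x1 : ℝ) : bR m x0 x1 = ‖massScaledPosition m x0 x1‖ := by
  simp only [bR, massScaledPosition, Complex.norm_eq_sqrt_sq_add_sq, mul_pow,
    Real.sq_sqrt M0_pos.le, Real.sq_sqrt (M1_pos hm).le]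

theorem bPsi_eq_arg {x0 : ℝ} (hx0 : 0 < x0) (x1 : ℝ) :
    bPsi m x0 x1 = (massScaledPosition m x0 x1).arg := by
  have hre : 0 < (massScaledPosition m x0 x1).re := massScaledPosition_re_pos hx0 x1
  obtain ⟨hlower, hupper⟩ := abs_lt.1 (Complex.abs_arg_lt_pi_div_two_iff.2 (Or.inl hre))
  rw [← Real.arctan_tan hlower hupper, Complex.tan_arg]
  rfl

theorem blowupVelocity_massScaled (hm : 0 < m) (x0 x1 p0 p1 : ℝ) :
    blowupVelocity 1 (massScaledPosition m x0 x1) (massScaledMomentum m p0 p1) =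
      ⟨bV m x0 x1 p0 p1, bW m x0 x1 p0 p1⟩ := by
  have h0 : √M0 ≠ 0 := (Real.sqrt_pos.2 M0_pos).ne'
  have h1 : √(M1 m) ≠ 0 := (Real.sqrt_pos.2 (M1_pos hm)).ne'
  rw [blowupVelocity, bV, bW, bR_eq_norm hm, Real.sqrt_div M0_pos.le,
    Real.sqrt_div (M1_pos hm).le, show (1 : ℝ) / 2 - 1 = -1 / 2 by norm_num]
  simp only [massScaledPosition, massScaledMomentum]
  apply Complex.ext
  · rw [Complex.smul_re, smul_eq_mul]
    congr 1
    simp only [Complex.mul_re, Complex.conj_re, Complex.conj_im]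
    field_simp
    ring
  · rw [Complex.smul_im, smul_eq_mul]
    congr 1
    simp only [Complex.mul_im, Complex.conj_re, Complex.conj_im]
    field_simp
    ring

theorem i3bpPot_mul (m : ℝ) {c : ℝ} (hc : 0 < c) (x0 x1 : ℝ) :
    i3bpPot m (c * x0) (c * x1) = c⁻¹ * i3bpPot m x0 x1 := by
  have hsqrt : √((c * x1) ^ 2 + (c * x0) ^ 2 / 4) = c * √(x1 ^ 2 + x0 ^ 2 / 4) := by
    rw [show (c * x1) ^ 2 + (c * x0) ^ 2 / 4 = c ^ 2 * (x1 ^ 2 + x0 ^ 2 / 4) by ring,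
      Real.sqrt_mul (sq_nonneg c), Real.sqrt_sq hc.le]
  rw [i3bpPot, i3bpPot, hsqrt, ← div_div, ← div_div]
  field_simp

theorem posHomogeneous_massScaledPot (m : ℝ) : PosHomogeneous (-1) (massScaledPot m) := by
  intro c hc z
  simp only [massScaledPot, Complex.smul_re, Complex.smul_im, smul_eq_mul, mul_div_assoc,
    i3bpPot_mul m hc, Real.rpow_neg_one]

theorem circleRestriction_massScaledPot (hm : 0 < m) :
    circleRestriction (massScaledPot m) = Vbar m := by
  ext θ
  have hM0 : √M0 = 1 / √2 := by rw [M0, Real.sqrt_div zero_le_one, Real.sqrt_one]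
  have hre : Real.cos θ / √M0 = √2 * Real.cos θ := by
    rw [hM0]
    field_simp
  have hdist : √((Real.sin θ / √(M1 m)) ^ 2 + (√2 * Real.cos θ) ^ 2 / 4) =
      √(2 * Real.cos θ ^ 2 + (2 * (2 + m) / m) * Real.sin θ ^ 2) / 2 := by
    rw [div_pow, mul_pow, Real.sq_sqrt (M1_pos hm).le, Real.sq_sqrt zero_le_two,
      ← Real.sqrt_sq zero_le_two, ← Real.sqrt_div' _ (sq_nonneg 2), Real.sqrt_sq zero_le_two, M1]
    congr 1
    field_simp
    ring
  rw [circleRestriction, massScaledPot, Complex.exp_ofReal_mul_I_re, Complex.exp_ofReal_mul_I_im,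
    hre, i3bpPot, hdist, Vbar]
  ring

theorem differentiableAt_massScaledPot (m : ℝ) {z : ℂ} (hz : z.re ≠ 0) :
    DifferentiableAt ℝ (massScaledPot m) z := by
  have hre : DifferentiableAt ℝ Complex.re z := Complex.reCLM.differentiableAt
  have him : DifferentiableAt ℝ Complex.im z := Complex.imCLM.differentiableAt
  have hx0 : z.re / √M0 ≠ 0 := div_ne_zero hz (Real.sqrt_pos.2 M0_pos).ne'
  have hdist : 0 < (z.im / √(M1 m)) ^ 2 + (z.re / √M0) ^ 2 / 4 := by positivity
  unfold massScaledPot i3bpPot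
  fun_prop (disch := first | assumption | exact hdist.ne' | exact (Real.sqrt_pos.2 hdist).ne')

theorem gradient_massScaledPot (hm : 0 < m) {x0 : ℝ} (hx0 : x0 ≠ 0) (x1 : ℝ) :
    ∇ (massScaledPot m) (massScaledPosition m x0 x1) =
      massScaledMomentum m (deriv (fun y ↦ i3bpPot m y x1) x0)
        (deriv (fun y ↦ i3bpPot m x0 y) x1) := by
  have h0 : √M0 ≠ 0 := (Real.sqrt_pos.2 M0_pos).ne'
  have h1 : √(M1 m) ≠ 0 := (Real.sqrt_pos.2 (M1_pos hm)).ne'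
  have hd := differentiableAt_massScaledPot m (z := massScaledPosition m x0 x1) (mul_ne_zero h0 hx0)
  rw [gradient_eq_partial_derivs hd]
  simp only [massScaledPosition, massScaledPot, massScaledMomentum, mul_div_cancel_left₀ _ h0,
    mul_div_cancel_left₀ _ h1]
  simp only [div_eq_inv_mul _ √M0, div_eq_inv_mul _ √(M1 m)]
  rw [deriv_comp_mul_left (√M0)⁻¹ (fun y ↦ i3bpPot m y x1),
    deriv_comp_mul_left (√(M1 m))⁻¹ (fun y ↦ i3bpPot m x0 y), inv_mul_cancel_left₀ h0,
    inv_mul_cancel_left₀ h1, smul_eq_mul, smul_eq_mul]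

variable {x0 x1 p0 p1 : ℝ → ℝ} {s : Set ℝ} {t : ℝ}

theorem IsI3BPSolutionOn.hasDerivAt_massScaledPosition (hm : 0 < m)
    (hsol : IsI3BPSolutionOn m x0 x1 p0 p1 s) (ht : t ∈ s) :
    HasDerivAt (fun u ↦ massScaledPosition m (x0 u) (x1 u))
      (massScaledMomentum m (p0 t) (p1 t)) t := by
  obtain ⟨hx0, hx1, -, -⟩ := hsol t ht
  have scale {μ : ℝ} (hμ : 0 < μ) (p : ℝ) : √μ * (p / μ) = p / √μ := by
    nth_rewrite 2 [← Real.mul_self_sqrt hμ.le]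
    field_simp
  have h := hasDerivAt_complex_mk (hx0.const_mul √M0) (hx1.const_mul √(M1 m))
  rwa [scale M0_pos, scale (M1_pos hm)] at h

theorem IsI3BPSolutionOn.hasDerivAt_massScaledMomentum (hm : 0 < m)
    (hsol : IsI3BPSolutionOn m x0 x1 p0 p1 s) (ht : t ∈ s) (hx0 : x0 t ≠ 0) :
    HasDerivAt (fun u ↦ massScaledMomentum m (p0 u) (p1 u))
      (-∇ (massScaledPot m) (massScaledPosition m (x0 t) (x1 t))) t := by
  obtain ⟨-, -, hp0, hp1⟩ := hsol t ht
  rw [gradient_massScaledPot hm hx0]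
  refine (hasDerivAt_complex_mk (hp0.div_const √M0) (hp1.div_const √(M1 m))).congr_deriv ?_
  apply Complex.ext <;> simp only [massScaledMomentum, neg_div, Complex.neg_re, Complex.neg_im]

end IsoscelesThreeBody

/-- Under the time reparametrization `dt/dτ = r^{3/2}`, the blowup variables of a solution
of the isosceles three-body problem satisfy Devaney's blown-up equations
`r' = rv`, `v' = w² + v²/2 + V̄(ψ)`, `ψ' = w`, `w' = -(1/2)vw - V̄'(ψ)`. -/
theorem statement8 (m : ℝ) (hm : 0 < m) (x0 x1 p0 p1 : ℝ → ℝ)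
    (I : Set ℝ) (hI : IsOpen I) (hx0 : ∀ t ∈ I, 0 < x0 t)
    (hsol : IsI3BPSolutionOn m x0 x1 p0 p1 I)
    (tof : ℝ → ℝ) (J : Set ℝ) (hJ : IsOpen J) (hmaps : ∀ τ ∈ J, tof τ ∈ I)
    (htof : ∀ τ ∈ J,
      HasDerivAt tof ((bR m (x0 (tof τ)) (x1 (tof τ))) ^ ((3:ℝ)/2)) τ) :
    ∀ τ ∈ J,
      HasDerivAt (fun s => bR m (x0 (tof s)) (x1 (tof s)))
        (bR m (x0 (tof τ)) (x1 (tof τ))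
          * bV m (x0 (tof τ)) (x1 (tof τ)) (p0 (tof τ)) (p1 (tof τ))) τ ∧
      HasDerivAt (fun s => bV m (x0 (tof s)) (x1 (tof s)) (p0 (tof s)) (p1 (tof s)))
        ((bW m (x0 (tof τ)) (x1 (tof τ)) (p0 (tof τ)) (p1 (tof τ)))^2
          + (bV m (x0 (tof τ)) (x1 (tof τ)) (p0 (tof τ)) (p1 (tof τ)))^2/2
          + Vbar m (bPsi m (x0 (tof τ)) (x1 (tof τ)))) τ ∧
      HasDerivAt (fun s => bPsi m (x0 (tof s)) (x1 (tof s)))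
        (bW m (x0 (tof τ)) (x1 (tof τ)) (p0 (tof τ)) (p1 (tof τ))) τ ∧
      HasDerivAt (fun s => bW m (x0 (tof s)) (x1 (tof s)) (p0 (tof s)) (p1 (tof s)))
        (-(1/2) * bV m (x0 (tof τ)) (x1 (tof τ)) (p0 (tof τ)) (p1 (tof τ))
            * bW m (x0 (tof τ)) (x1 (tof τ)) (p0 (tof τ)) (p1 (tof τ))
          - deriv (Vbar m) (bPsi m (x0 (tof τ)) (x1 (tof τ)))) τ := by
  intro τ hτ
  let q (s : ℝ) := massScaledPosition m (x0 (tof s)) (x1 (tof s))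
  let p (s : ℝ) := massScaledMomentum m (p0 (tof s)) (p1 (tof s))
  have hpos : 0 < x0 (tof τ) := hx0 _ (hmaps τ hτ)
  have hslit : q τ ∈ Complex.slitPlane := massScaledPosition_mem_slitPlane hpos _
  have hne : q τ ≠ 0 := Complex.slitPlane_ne_zero hslit
  have hclock : HasDerivAt tof (‖q τ‖ ^ (1 + (1 : ℝ) / 2)) τ := by
    rw [← bR_eq_norm hm, show 1 + (1 : ℝ) / 2 = 3 / 2 by norm_num]
    exact htof τ hτ
  have hq : HasDerivAt q (‖q τ‖ ^ (1 + (1 : ℝ) / 2) • p τ) τ :=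
    (hsol.hasDerivAt_massScaledPosition hm (hmaps τ hτ)).scomp τ hclock
  have hp : HasDerivAt p (‖q τ‖ ^ (1 + (1 : ℝ) / 2) • -∇ (massScaledPot m) (q τ)) τ :=
    (hsol.hasDerivAt_massScaledMomentum hm (hmaps τ hτ) hpos.ne').scomp τ hclock
  have hU := posHomogeneous_massScaledPot m
  have hd : DifferentiableAt ℝ (massScaledPot m) (q τ) :=
    differentiableAt_massScaledPot m (massScaledPosition_re_pos hpos _).ne'
  have hr' := hasDerivAt_norm_blowup hne hq
  have hv' := hU.hasDerivAt_re_blowupVelocity hne hd hq hp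
  have hψ' := hasDerivAt_arg_blowup hslit hq
  have hw' := hU.hasDerivAt_im_blowupVelocity hne hd hq hp
  simp only [q, p, blowupVelocity_massScaled hm, ← bR_eq_norm hm, ← bPsi_eq_arg hpos,
    circleRestriction_massScaledPot hm] at hr' hv' hψ' hw'
  refine ⟨hr', hv'.congr_deriv (by ring), hψ'.congr_of_eventuallyEq ?_, hw'.congr_deriv (by ring)⟩
  filter_upwards [hJ.mem_nhds hτ] with s hs using bPsi_eq_arg (hx0 _ (hmaps s hs)) _
end

section
/- Let m > 0 and V̄(ψ) = −1/(√2 cos ψ) − 4m/√(2cos²ψ + (2(2+m)/m) sin²ψ), defined for ψ ∈ (−π/2, π/2). Then the functions ψ ↦ V̄(ψ) cos ψ and ψ ↦ V̄′(ψ) cos²ψ extend to real-analytic functions on all of ℝ; explicitly, V̄(ψ)cos ψ = −1/√2 − 4m cos ψ·D(ψ)^{−1/2} and V̄′(ψ)cos²ψ = −sin ψ/√2 + 16 sin ψ cos³ψ·D(ψ)^{−3/2}, where D(ψ) = 2cos²ψ + (2(2+m)/m) sin²ψ > 0 for all ψ. Consequently, the right-hand side of the regularized blown-up isosceles system (dr/dτ̂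 = r v cos ψ; dv/dτ̂ = (2rE − v²/2 − V̄(ψ)) cos ψ; dψ/dτ̂ = ŵ; dŵ/dτ̂ = −(1/2) v ŵ cos ψ − V̄′(ψ) cos²ψ − sin ψ cos ψ (2rE − v² − 2V̄(ψ))) is a real-analytic vector field on [0,∞) × ℝ × [−π/2, π/2] × ℝ, i.e. the double collision ψ = ±π/2 of the binary is regularized. -/
open Filter Set Topology

/-!
The only summand of `V̄` that is singular at `cos ψ = 0` is `-1 / (√2 cos ψ)`. Its pole is simple,
so `cos ψ` cancels it, and `cos² ψ` cancels the double pole of its derivative; the remaining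
occurrence `2 sin ψ cos ψ V̄` of the potential in the field again involves only `V̄ cos ψ`. The
other summand is analytic because the positive definite quadratic form `D` in `(cos ψ, sin ψ)`
never vanishes on the unit circle.
-/

namespace Isosceles

open Real

section QuadraticForm

variable {a b : ℝ}

lemma mul_cos_sq_add_mul_sin_sq_pos (ha : 0 < a) (hb : 0 < b) (ψ : ℝ) :
    0 < a * cos ψ ^ 2 + b * sin ψ ^ 2 := by
  rcases eq_or_ne (sin ψ) 0 with hs | hs
  · have hc : cos ψ ^ 2 = 1 := by simp [cos_sq', hs]
    simpa [hs, hc] using ha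
  · positivity

lemma hasDerivAt_mul_cos_sq_add_mul_sin_sq (a b ψ : ℝ) :
    HasDerivAt (fun x ↦ a * cos x ^ 2 + b * sin x ^ 2) (2 * (b - a) * (sin ψ * cos ψ)) ψ := by
  refine ((((hasDerivAt_cos ψ).fun_pow 2).const_mul a).fun_add
    (((hasDerivAt_sin ψ).fun_pow 2).const_mul b)).congr_deriv ?_
  ring

end QuadraticForm

lemma analyticAt_sqrt_comp {X : Type*} [NormedAddCommGroup X] [NormedSpace ℝ X]
    {f : X → ℝ} {x : X} (hf : AnalyticAt ℝ f x) (hx : f x ≠ 0) :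
    AnalyticAt ℝ (fun y ↦ √(f y)) x :=
  (contDiffAt_sqrt (n := ⊤) hx).analyticAt.comp hf

/-- The trigonometric form `D(ψ)` under the square root in `V̄`. -/
noncomputable def denom (m ψ : ℝ) : ℝ :=
  2 * cos ψ ^ 2 + (2 * (2 + m) / m) * sin ψ ^ 2

/-- The extension of `V̄(ψ) cos ψ` across the double collisions `cos ψ = 0`. -/
noncomputable def regularizedPotential (m ψ : ℝ) : ℝ :=
  -1 / √2 - 4 * m * cos ψ / √(denom m ψ)

/-- The extension of `V̄′(ψ) cos² ψ` across the double collisions `cos ψ = 0`. -/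
noncomputable def regularizedForce (m ψ : ℝ) : ℝ :=
  -sin ψ / √2 + 16 * sin ψ * cos ψ ^ 3 / √(denom m ψ) ^ 3

/-- The right-hand side of the blown-up system in the time `τ̂`, at the point
`p = (r, v, ψ, ŵ)`, for an arbitrary potential `V` in place of `V̄`. -/
noncomputable def blownUpField (E : ℝ) (V : ℝ → ℝ) (p : ℝ × ℝ × ℝ × ℝ) : ℝ × ℝ × ℝ × ℝ :=
  (p.1 * p.2.1 * cos p.2.2.1,
   (2 * p.1 * E - p.2.1 ^ 2 / 2 - V p.2.2.1) * cos p.2.2.1,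
   p.2.2.2,
   -(1 / 2) * p.2.1 * p.2.2.2 * cos p.2.2.1 - deriv V p.2.2.1 * cos p.2.2.1 ^ 2
     - sin p.2.2.1 * cos p.2.2.1 * (2 * p.1 * E - p.2.1 ^ 2 - 2 * V p.2.2.1))

/-- The blown-up field with `V(ψ) cos ψ` replaced by `g₁ ψ` and `V′(ψ) cos² ψ` by `g₂ ψ`, so
that it makes sense where `V` does not. -/
noncomputable def regularizedField (E : ℝ) (g₁ g₂ : ℝ → ℝ) (p : ℝ × ℝ × ℝ × ℝ) :
    ℝ × ℝ × ℝ × ℝ :=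
  (p.1 * p.2.1 * cos p.2.2.1,
   (2 * p.1 * E - p.2.1 ^ 2 / 2) * cos p.2.2.1 - g₁ p.2.2.1,
   p.2.2.2,
   -(1 / 2) * p.2.1 * p.2.2.2 * cos p.2.2.1 - g₂ p.2.2.1
     - sin p.2.2.1 * cos p.2.2.1 * (2 * p.1 * E - p.2.1 ^ 2)
     + 2 * sin p.2.2.1 * g₁ p.2.2.1)

section Field

variable {E : ℝ} {g₁ g₂ : ℝ → ℝ} {p : ℝ × ℝ × ℝ × ℝ}

lemma analyticAt_regularizedField (h₁ : AnalyticAt ℝ g₁ p.2.2.1)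
    (h₂ : AnalyticAt ℝ g₂ p.2.2.1) : AnalyticAt ℝ (regularizedField E g₁ g₂) p := by
  have hr : AnalyticAt ℝ (fun q : ℝ × ℝ × ℝ × ℝ ↦ q.1) p := analyticAt_fst
  have hv : AnalyticAt ℝ (fun q : ℝ × ℝ × ℝ × ℝ ↦ q.2.1) p :=
    analyticAt_fst.fun_comp analyticAt_snd
  have hψ : AnalyticAt ℝ (fun q : ℝ × ℝ × ℝ × ℝ ↦ q.2.2.1) p :=
    analyticAt_fst.fun_comp (analyticAt_snd.fun_comp analyticAt_snd)
  have hw : AnalyticAt ℝ (fun q : ℝ × ℝ × ℝ × ℝ ↦ q.2.2.2) p :=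
    analyticAt_snd.fun_comp (analyticAt_snd.fun_comp analyticAt_snd)
  unfold regularizedField
  fun_prop (disch := norm_num)

lemma regularizedField_eq_blownUpField {V : ℝ → ℝ} (h₁ : V p.2.2.1 * cos p.2.2.1 = g₁ p.2.2.1)
    (h₂ : deriv V p.2.2.1 * cos p.2.2.1 ^ 2 = g₂ p.2.2.1) :
    regularizedField E g₁ g₂ p = blownUpField E V p := by
  simp only [regularizedField, blownUpField, ← h₁, ← h₂, Prod.mk.injEq, true_and]
  constructor <;> ring

end Field

section Potential

variable {m ψ : ℝ}

lemma denom_pos (hm : 0 < (2 + m) / m) (ψ : ℝ) : 0 < denom m ψ :=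
  mul_cos_sq_add_mul_sin_sq_pos two_pos (by rw [mul_div_assoc]; positivity) ψ

lemma hasDerivAt_denom (hm : m ≠ 0) (ψ : ℝ) :
    HasDerivAt (denom m) (8 / m * (sin ψ * cos ψ)) ψ := by
  refine (hasDerivAt_mul_cos_sq_add_mul_sin_sq 2 (2 * (2 + m) / m) ψ).congr_deriv ?_
  field_simp
  ring

lemma analyticAt_sqrt_denom (hD : denom m ψ ≠ 0) : AnalyticAt ℝ (fun x ↦ √(denom m x)) ψ := by
  refine analyticAt_sqrt_comp ?_ hD
  unfold denom
  fun_prop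

lemma analyticAt_regularizedPotential (hD : 0 < denom m ψ) :
    AnalyticAt ℝ (regularizedPotential m) ψ := by
  have hsqrt := analyticAt_sqrt_denom hD.ne'
  unfold regularizedPotential
  fun_prop (disch := positivity)

lemma analyticAt_regularizedForce (hD : 0 < denom m ψ) :
    AnalyticAt ℝ (regularizedForce m) ψ := by
  have hsqrt := analyticAt_sqrt_denom hD.ne'
  unfold regularizedForce
  fun_prop (disch := positivity)

lemma Vbar_mul_cos (m : ℝ) (hc : cos ψ ≠ 0) :
    Vbar m ψ * cos ψ = regularizedPotential m ψ := by
  rw [Vbar, ← denom, regularizedPotential, sub_mul, div_mul_eq_mul_div, div_mul_eq_mul_div,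
    mul_div_mul_right _ _ hc]

lemma hasDerivAt_Vbar (hm : m ≠ 0) (hc : cos ψ ≠ 0) (hD : 0 < denom m ψ) :
    HasDerivAt (Vbar m)
      (-sin ψ / (√2 * cos ψ ^ 2) + 16 * sin ψ * cos ψ / √(denom m ψ) ^ 3) ψ := by
  have hbinary : HasDerivAt (fun x ↦ -1 / (√2 * cos x)) (-sin ψ / (√2 * cos ψ ^ 2)) ψ := by
    refine ((hasDerivAt_const ψ (-1 : ℝ)).fun_div ((hasDerivAt_cos ψ).const_mul √2)
      (by positivity)).congr_deriv ?_
    field_simp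
    ring
  have houter : HasDerivAt (fun x ↦ 4 * m / √(denom m x))
      (-(16 * sin ψ * cos ψ / √(denom m ψ) ^ 3)) ψ := by
    refine ((hasDerivAt_const ψ (4 * m)).fun_div ((hasDerivAt_denom hm ψ).sqrt hD.ne')
      (by positivity)).congr_deriv ?_
    field_simp
    ring
  exact (hbinary.fun_sub houter).congr_deriv (sub_neg_eq_add _ _)

lemma deriv_Vbar_mul_cos_sq (hm : m ≠ 0) (hc : cos ψ ≠ 0) (hD : 0 < denom m ψ) :
    deriv (Vbar m) ψ * cos ψ ^ 2 = regularizedForce m ψ := by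
  rw [(hasDerivAt_Vbar hm hc hD).deriv, regularizedForce]
  field_simp

end Potential

end Isosceles

open Isosceles in
theorem statement9_general {m : ℝ} (hm : 0 < (2 + m) / m) (E : ℝ) :
    (∀ ψ, 0 < denom m ψ) ∧
    (∀ ψ, Real.cos ψ ≠ 0 →
      Vbar m ψ * Real.cos ψ = regularizedPotential m ψ ∧
      deriv (Vbar m) ψ * Real.cos ψ ^ 2 = regularizedForce m ψ) ∧
    (∀ ψ, AnalyticAt ℝ (regularizedPotential m) ψ ∧ AnalyticAt ℝ (regularizedForce m) ψ) ∧
    (∀ p, AnalyticAt ℝ (regularizedField E (regularizedPotential m) (regularizedForce m)) p) ∧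
    (∀ p : ℝ × ℝ × ℝ × ℝ, Real.cos p.2.2.1 ≠ 0 →
      regularizedField E (regularizedPotential m) (regularizedForce m) p =
        blownUpField E (Vbar m) p) := by
  have hm₀ : m ≠ 0 := (div_ne_zero_iff.mp hm.ne').2
  have hD := denom_pos hm
  have hV (ψ : ℝ) (hc : Real.cos ψ ≠ 0) := And.intro (Vbar_mul_cos m hc)
    (deriv_Vbar_mul_cos_sq hm₀ hc (hD ψ))
  have hg (ψ : ℝ) := And.intro (analyticAt_regularizedPotential (hD ψ))
    (analyticAt_regularizedForce (hD ψ))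
  exact ⟨hD, hV, hg, fun p ↦ analyticAt_regularizedField (hg _).1 (hg _).2,
    fun p hc ↦ regularizedField_eq_blownUpField (hV _ hc).1 (hV _ hc).2⟩

/-- Regularization of double collisions: `V̄(ψ)cos ψ` and `V̄′(ψ)cos²ψ` extend to
real-analytic functions of `ψ` on all of `ℝ`, with the stated explicit formulas, and
consequently the right-hand side of the regularized blown-up isosceles system is a
real-analytic vector field on `[0,∞) × ℝ × [-π/2, π/2] × ℝ`. -/
theorem statement9 (m : ℝ) (hm : 0 < m) (E : ℝ) :
    let D : ℝ → ℝ := fun ψ => 2*Real.cos ψ^2 + (2*(2+m)/m)*Real.sin ψ^2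
    let g₁ : ℝ → ℝ := fun ψ => -1/Real.sqrt 2 - 4*m*Real.cos ψ/Real.sqrt (D ψ)
    let g₂ : ℝ → ℝ := fun ψ =>
      -Real.sin ψ/Real.sqrt 2 + 16*Real.sin ψ*Real.cos ψ^3/(Real.sqrt (D ψ))^3
    let F : ℝ × ℝ × ℝ × ℝ → ℝ × ℝ × ℝ × ℝ := fun p =>
      (p.1 * p.2.1 * Real.cos p.2.2.1,
       (2*p.1*E - p.2.1^2/2)*Real.cos p.2.2.1 - g₁ p.2.2.1,
       p.2.2.2,
       -(1/2)*p.2.1*p.2.2.2*Real.cos p.2.2.1 - g₂ p.2.2.1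
         - Real.sin p.2.2.1 * Real.cos p.2.2.1 * (2*p.1*E - p.2.1^2)
         + 2*Real.sin p.2.2.1 * g₁ p.2.2.1)
    (∀ ψ : ℝ, 0 < D ψ) ∧
    (∀ ψ ∈ Ioo (-(Real.pi/2)) (Real.pi/2),
      Vbar m ψ * Real.cos ψ = g₁ ψ ∧ deriv (Vbar m) ψ * Real.cos ψ^2 = g₂ ψ) ∧
    (∀ ψ : ℝ, AnalyticAt ℝ g₁ ψ ∧ AnalyticAt ℝ g₂ ψ) ∧
    (∀ r v ψ w : ℝ, 0 ≤ r → ψ ∈ Icc (-(Real.pi/2)) (Real.pi/2) →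
      AnalyticAt ℝ F (r, v, ψ, w)) ∧
    -- F agrees with the right-hand side of the regularized blown-up system where V̄ is defined
    (∀ r v ψ w : ℝ, ψ ∈ Ioo (-(Real.pi/2)) (Real.pi/2) →
      F (r, v, ψ, w) =
        (r*v*Real.cos ψ,
         (2*r*E - v^2/2 - Vbar m ψ)*Real.cos ψ,
         w,
         -(1/2)*v*w*Real.cos ψ - deriv (Vbar m) ψ * Real.cos ψ^2
           - Real.sin ψ * Real.cos ψ * (2*r*E - v^2 - 2*Vbar m ψ))) := by
  obtain ⟨hD, hV, hg, hF, hfield⟩ := statement9_general (m := m) (by positivity) E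
  exact ⟨hD, fun ψ hψ ↦ hV ψ (Real.cos_pos_of_mem_Ioo hψ).ne', hg, fun r v ψ w _ _ ↦ hF _,
    fun r v ψ w hψ ↦ hfield (r, v, ψ, w) (Real.cos_pos_of_mem_Ioo hψ).ne'⟩
end

section
/- Fix m > 0 and E ∈ ℝ. Along any solution (r, v, ψ, ŵ)(τ̂) of the regularized blown-up isosceles system with ψ(τ̂) ∈ (−π/2, π/2), the quantity Φ = ŵ²/(2cos²ψ) + v²/2 + V̄(ψ) − rE has the following property: if Φ = 0 at some time τ̂₀, then Φ = 0 for all times; i.e. the energy relation rE = ŵ²/(2cos²ψ) + v²/2 + V̄(ψ) defines an invariant set of the regularized flow. -/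
open Filter Set Topology

/-- `(r, v, ψ, w)` solves the regularized blown-up isosceles equations (with `ŵ = w cos ψ`
and time `τ̂`, `dτ/dτ̂ = cos ψ`) on the set `s`. -/
def IsRegularizedSolutionOn (m E : ℝ) (r v ψ w : ℝ → ℝ) (s : Set ℝ) : Prop :=
  ∀ τ ∈ s,
    HasDerivAt r (r τ * v τ * Real.cos (ψ τ)) τ ∧
    HasDerivAt v ((2*r τ*E - (v τ)^2/2 - Vbar m (ψ τ)) * Real.cos (ψ τ)) τ ∧
    HasDerivAt ψ (w τ) τ ∧
    HasDerivAt w (-(1/2)*v τ*w τ*Real.cos (ψ τ)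
      - deriv (Vbar m) (ψ τ) * Real.cos (ψ τ)^2
      - Real.sin (ψ τ) * Real.cos (ψ τ) * (2*r τ*E - (v τ)^2 - 2*Vbar m (ψ τ))) τ

/-!
Multiplying `Φ` by `cos² ψ` clears the denominator under `ŵ²`:
`Ψ = ŵ²/2 + cos² ψ (v²/2 + V̄(ψ) - rE)` satisfies `Ψ' = -v cos ψ Ψ` along solutions. This is a
linear homogeneous equation with continuous coefficient, so `Ψ` vanishes identically once it
vanishes somewhere, and it vanishes exactly where `Φ` does because `cos ψ ≠ 0`.
-/

theorem eqOn_zero_of_isIntegralCurveOn_linear {F : Type*} [NormedAddCommGroup F] [NormedSpace ℝ F]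
    {A : ℝ → F →L[ℝ] F} {f : ℝ → F} {I : Set ℝ} {t₀ : ℝ} (hI : I.OrdConnected)
    (hA : ContinuousOn A I) (hf : IsIntegralCurveOn f (fun t x ↦ A t x) I) (ht₀ : t₀ ∈ I)
    (h0 : f t₀ = 0) : EqOn f 0 I := by
  intro t ht
  have hsub : uIcc t₀ t ⊆ I := hI.uIcc_subset ht₀ ht
  obtain ⟨K, hK⟩ := isCompact_uIcc.exists_bound_of_continuousOn (hA.mono hsub)
  have hlip : ∀ s ∈ uIcc t₀ t, LipschitzOnWith K.toNNReal (A s) univ := fun s hs ↦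
    ((A s).lipschitz.weaken (NNReal.le_toNNReal_of_coe_le (hK s hs))).lipschitzOnWith
  have hcont : ContinuousOn f (uIcc t₀ t) := hf.continuousOn.mono hsub
  have hderiv : IsIntegralCurveOn f (fun t x ↦ A t x) (uIcc t₀ t) := hf.mono hsub
  have hzero : ∀ (s : ℝ) (J : Set ℝ), HasDerivWithinAt (0 : ℝ → F) (A s 0) J s := fun s J ↦ by
    rw [map_zero]
    exact hasDerivWithinAt_zero s J
  rcases le_total t₀ t with hle | hle
  · rw [uIcc_of_le hle] at hlip hcont hderiv
    exact ODE_solution_unique_of_mem_Icc_right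
      (fun s hs ↦ hlip s (Ico_subset_Icc_self hs)) hcont
      (fun s hs ↦ (hderiv s (Ico_subset_Icc_self hs)).mono_of_mem_nhdsWithin
        (Icc_mem_nhdsGE_of_mem hs))
      (fun _ _ ↦ mem_univ _) continuousOn_const (fun s _ ↦ hzero s _) (fun _ _ ↦ mem_univ _) h0
      (right_mem_Icc.mpr hle)
  · rw [uIcc_of_ge hle] at hlip hcont hderiv
    exact ODE_solution_unique_of_mem_Icc_left
      (fun s hs ↦ hlip s (Ioc_subset_Icc_self hs)) hcont
      (fun s hs ↦ (hderiv s (Ioc_subset_Icc_self hs)).mono_of_mem_nhdsWithin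
        (Icc_mem_nhdsLE_of_mem hs))
      (fun _ _ ↦ mem_univ _) continuousOn_const (fun s _ ↦ hzero s _) (fun _ _ ↦ mem_univ _) h0
      (left_mem_Icc.mpr hle)

/-- The regularized blown-up equations for an arbitrary potential `U` in place of `V̄`, to be
satisfied on the time set `I`. Derivatives are taken within `I`, so that `I` may contain
endpoints. -/
structure IsRegularizedSolutionWithin (U : ℝ → ℝ) (E : ℝ) (r v ψ w : ℝ → ℝ) (I : Set ℝ) :
    Prop where
  hasDerivWithinAt_radius : ∀ τ ∈ I, HasDerivWithinAt r (r τ * v τ * Real.cos (ψ τ)) I τ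
  hasDerivWithinAt_velocity : ∀ τ ∈ I,
    HasDerivWithinAt v ((2 * r τ * E - v τ ^ 2 / 2 - U (ψ τ)) * Real.cos (ψ τ)) I τ
  hasDerivWithinAt_angle : ∀ τ ∈ I, HasDerivWithinAt ψ (w τ) I τ
  hasDerivWithinAt_angularVelocity : ∀ τ ∈ I,
    HasDerivWithinAt w (-(1 / 2) * v τ * w τ * Real.cos (ψ τ)
      - deriv U (ψ τ) * Real.cos (ψ τ) ^ 2
      - Real.sin (ψ τ) * Real.cos (ψ τ) * (2 * r τ * E - v τ ^ 2 - 2 * U (ψ τ))) I τ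

theorem IsRegularizedSolutionOn.isRegularizedSolutionWithin {m E : ℝ} {r v ψ w : ℝ → ℝ}
    {I : Set ℝ} (h : IsRegularizedSolutionOn m E r v ψ w I) :
    IsRegularizedSolutionWithin (Vbar m) E r v ψ w I where
  hasDerivWithinAt_radius τ hτ := (h τ hτ).1.hasDerivWithinAt
  hasDerivWithinAt_velocity τ hτ := (h τ hτ).2.1.hasDerivWithinAt
  hasDerivWithinAt_angle τ hτ := (h τ hτ).2.2.1.hasDerivWithinAt
  hasDerivWithinAt_angularVelocity τ hτ := (h τ hτ).2.2.2.hasDerivWithinAt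

/-- The energy defect `Φ` multiplied by `cos² ψ`, as a function of the state `(r, v, ψ, w)`; the
factor clears the denominator of the angular kinetic term. -/
noncomputable def regularizedEnergyDefect (U : ℝ → ℝ) (E r v ψ w : ℝ) : ℝ :=
  w ^ 2 / 2 + Real.cos ψ ^ 2 * (v ^ 2 / 2 + U ψ - r * E)

theorem regularizedEnergyDefect_eq_zero_iff {U : ℝ → ℝ} {E r v ψ w : ℝ} (hψ : Real.cos ψ ≠ 0) :
    regularizedEnergyDefect U E r v ψ w = 0 ↔
      w ^ 2 / (2 * Real.cos ψ ^ 2) + v ^ 2 / 2 + U ψ - r * E = 0 := by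
  have hfactor : regularizedEnergyDefect U E r v ψ w =
      Real.cos ψ ^ 2 * (w ^ 2 / (2 * Real.cos ψ ^ 2) + v ^ 2 / 2 + U ψ - r * E) := by
    unfold regularizedEnergyDefect
    field_simp
    ring
  rw [hfactor, mul_eq_zero_iff_left (pow_ne_zero 2 hψ)]

namespace IsRegularizedSolutionWithin

variable {U : ℝ → ℝ} {E : ℝ} {r v ψ w : ℝ → ℝ} {I : Set ℝ}

theorem hasDerivWithinAt_regularizedEnergyDefect (h : IsRegularizedSolutionWithin U E r v ψ w I)
    {τ : ℝ} (hτ : τ ∈ I) (hU : DifferentiableAt ℝ U (ψ τ)) :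
    HasDerivWithinAt (fun t ↦ regularizedEnergyDefect U E (r t) (v t) (ψ t) (w t))
      (-(v τ * Real.cos (ψ τ)) * regularizedEnergyDefect U E (r τ) (v τ) (ψ τ) (w τ)) I τ := by
  have hr := h.hasDerivWithinAt_radius τ hτ
  have hv := h.hasDerivWithinAt_velocity τ hτ
  have hψ := h.hasDerivWithinAt_angle τ hτ
  have hw := h.hasDerivWithinAt_angularVelocity τ hτ
  have hUψ : HasDerivWithinAt (fun t ↦ U (ψ t)) (deriv U (ψ τ) * w τ) I τ :=
    hU.hasDerivAt.comp_hasDerivWithinAt τ hψ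
  refine (((hw.pow 2).div_const 2).add
    ((hψ.cos.pow 2).mul ((((hv.pow 2).div_const 2).add hUψ).sub (hr.mul_const E)))).congr_deriv ?_
  simp only [regularizedEnergyDefect, Pi.add_apply, Pi.sub_apply, Pi.pow_apply]
  ring

theorem regularizedEnergyDefect_eq_zero (h : IsRegularizedSolutionWithin U E r v ψ w I)
    (hI : I.OrdConnected) (hU : ∀ τ ∈ I, DifferentiableAt ℝ U (ψ τ)) {τ₀ : ℝ} (hτ₀ : τ₀ ∈ I)
    (h0 : regularizedEnergyDefect U E (r τ₀) (v τ₀) (ψ τ₀) (w τ₀) = 0) :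
    ∀ τ ∈ I, regularizedEnergyDefect U E (r τ) (v τ) (ψ τ) (w τ) = 0 := by
  have hv : ContinuousOn v I := fun τ hτ ↦ (h.hasDerivWithinAt_velocity τ hτ).continuousWithinAt
  have hψ : ContinuousOn ψ I := fun τ hτ ↦ (h.hasDerivWithinAt_angle τ hτ).continuousWithinAt
  exact eqOn_zero_of_isIntegralCurveOn_linear
    (A := fun τ ↦ (-(v τ * Real.cos (ψ τ))) • ContinuousLinearMap.id ℝ ℝ) hI (by fun_prop)
    (fun τ hτ ↦ h.hasDerivWithinAt_regularizedEnergyDefect hτ (hU τ hτ)) hτ₀ h0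

end IsRegularizedSolutionWithin

theorem differentiableAt_Vbar {m ψ : ℝ} (hm : 0 < m) (hψ : Real.cos ψ ≠ 0) :
    DifferentiableAt ℝ (Vbar m) ψ := by
  have hradicand : 2 * Real.cos ψ ^ 2 + (2 * (2 + m) / m) * Real.sin ψ ^ 2 ≠ 0 := by positivity
  have hsqrt : √(2 * Real.cos ψ ^ 2 + (2 * (2 + m) / m) * Real.sin ψ ^ 2) ≠ 0 := by positivity
  have hdenom : √2 * Real.cos ψ ≠ 0 := by positivity
  unfold Vbar
  fun_prop (disch := assumption)

theorem statement10_general {U : ℝ → ℝ} {E : ℝ} {r v ψ w : ℝ → ℝ} {I : Set ℝ}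
    (hI : I.OrdConnected) (hcos : ∀ τ ∈ I, Real.cos (ψ τ) ≠ 0)
    (hU : ∀ τ ∈ I, DifferentiableAt ℝ U (ψ τ))
    (hsol : IsRegularizedSolutionWithin U E r v ψ w I) {τ₀ : ℝ} (hτ₀ : τ₀ ∈ I)
    (h0 : w τ₀ ^ 2 / (2 * Real.cos (ψ τ₀) ^ 2) + v τ₀ ^ 2 / 2 + U (ψ τ₀) - r τ₀ * E = 0) :
    ∀ τ ∈ I, w τ ^ 2 / (2 * Real.cos (ψ τ) ^ 2) + v τ ^ 2 / 2 + U (ψ τ) - r τ * E = 0 := by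
  have hzero := hsol.regularizedEnergyDefect_eq_zero hI hU hτ₀
    ((regularizedEnergyDefect_eq_zero_iff (hcos τ₀ hτ₀)).mpr h0)
  exact fun τ hτ ↦ (regularizedEnergyDefect_eq_zero_iff (hcos τ hτ)).mp (hzero τ hτ)

/-- The energy relation `rE = ŵ²/(2cos²ψ) + v²/2 + V̄(ψ)` defines an invariant set of the
regularized flow: if the quantity `Φ` vanishes at one time it vanishes at all times. -/
theorem statement10 (m E : ℝ) (hm : 0 < m) (r v ψ w : ℝ → ℝ) (I : Set ℝ)
    (hIo : IsOpen I) (hIc : IsPreconnected I)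
    (hψ : ∀ τ ∈ I, ψ τ ∈ Ioo (-(Real.pi/2)) (Real.pi/2))
    (hsol : IsRegularizedSolutionOn m E r v ψ w I)
    (τ₀ : ℝ) (hτ₀ : τ₀ ∈ I)
    (h0 : (w τ₀)^2/(2*Real.cos (ψ τ₀)^2) + (v τ₀)^2/2 + Vbar m (ψ τ₀) - r τ₀ * E = 0) :
    ∀ τ ∈ I, (w τ)^2/(2*Real.cos (ψ τ)^2) + (v τ)^2/2 + Vbar m (ψ τ) - r τ * E = 0 := by
  have hcos τ (hτ : τ ∈ I) : Real.cos (ψ τ) ≠ 0 := (Real.cos_pos_of_mem_Ioo (hψ τ hτ)).ne'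
  exact statement10_general hIc.ordConnected hcos (fun τ hτ ↦ differentiableAt_Vbar hm (hcos τ hτ))
    hsol.isRegularizedSolutionWithin hτ₀ h0
end

section
/- Let m > 0, M₀ = 1/2, M₁ = 2m/(m+2), and for ψ ∈ (0, π/2) and θ ∈ ℝ define F(ψ,θ) = −Σ_{i∈{0,1}} m (sin²ψ/M₁ + cos²ψ/(4M₀) + (−1)^i (sin ψ cos ψ/√(M₀M₁)) cos θ)^{−1/2} − √M₀/cos ψ (this is the rescaled potential r·V of the three-body problem in polar blowup variables, with θ = θ₀ − θ₁ the relative polar angle). Then ∂²F/∂θ² evaluated at θ = π/2 equals −(3m/2)(M₁M₀)^{−1} sin²ψ cos²ψ / (M₁^{−1} sin²ψ + cos²ψ/(4M₀))^{5/2}, which is strictly negative for every ψ ∈ (0, π/2); moreover ∂F/∂θ vanishes at θ = π/2. -/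
open Filter Set Topology

/-!
Each of the two pair terms is `g (A + B cos θ)` with `g y = m / √y` and opposite signs of `B`.
The reflection `θ ↦ π - θ` exchanges them, so `π/2` is a critical point. Since `cos` has
derivative `-1` and vanishing second derivative at `π/2`, each term contributes `B² g''(A)` to the
second derivative of their sum, and `g''` is positive when `m > 0`.
-/

theorem deriv_eq_zero_of_forall_sub_eq {𝕜 E : Type*} [NontriviallyNormedField 𝕜]
    [NormedAddCommGroup E] [NormedSpace 𝕜 E] [IsAddTorsionFree E] {f : 𝕜 → E} {a : 𝕜}
    (hf : ∀ x, f (a + a - x) = f x) : deriv f a = 0 := by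
  have h : deriv f a = -deriv f a := by
    simpa only [hf, add_sub_cancel_right] using deriv_comp_const_sub f (a + a) a
  exact self_eq_neg.mp h

theorem iteratedDeriv_two_comp_add_mul_cos {g : ℝ → ℝ} {A : ℝ} (hg : ContDiffAt ℝ 2 g A) (B : ℝ) :
    iteratedDeriv 2 (fun θ => g (A + B * Real.cos θ)) (Real.pi / 2) =
      B ^ 2 * iteratedDeriv 2 g A := by
  set u : ℝ → ℝ := fun θ => A + B * Real.cos θ
  have hu : ContDiffAt ℝ 2 u (Real.pi / 2) := by fun_prop
  have hu₀ : u (Real.pi / 2) = A := by simp [u]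
  have hu₁ : deriv u (Real.pi / 2) = -B := by simp [u]
  have hu₂ : iteratedDeriv 2 u (Real.pi / 2) = 0 := by
    simp [u, iteratedDeriv_const_add, iteratedDeriv_succ]
  calc iteratedDeriv 2 (g ∘ u) (Real.pi / 2)
      = iteratedDeriv 2 g A * (-B) ^ 2 + deriv g A * 0 := by
        rw [iteratedDeriv_comp_two (by rwa [hu₀]) hu, hu₀, hu₁, hu₂]
    _ = B ^ 2 * iteratedDeriv 2 g A := by ring

theorem iteratedDeriv_two_sum_comp_add_mul_cos {ι : Type*} (s : Finset ι) {g : ℝ → ℝ} {A : ℝ}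
    (hg : ContDiffAt ℝ 2 g A) (B : ι → ℝ) :
    iteratedDeriv 2 (fun θ => ∑ i ∈ s, g (A + B i * Real.cos θ)) (Real.pi / 2) =
      (∑ i ∈ s, B i ^ 2) * iteratedDeriv 2 g A := by
  have hterm (i : ι) : ContDiffAt ℝ 2 (fun θ => g (A + B i * Real.cos θ)) (Real.pi / 2) :=
    ContDiffAt.comp (g := g) _ (by simpa using hg) (by fun_prop)
  rw [iteratedDeriv_fun_sum fun i _ => hterm i, Finset.sum_mul]
  simp only [iteratedDeriv_two_comp_add_mul_cos hg]

theorem iteratedDeriv_two_inv_sqrt (y : ℝ) :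
    iteratedDeriv 2 (fun x => (√x)⁻¹) y = 3 / 4 * y ^ (-(5 / 2) : ℝ) := by
  have hpow : (fun x : ℝ => (√x)⁻¹) = fun x => x ^ (-(1 / 2) : ℝ) := by
    ext x
    rw [← Real.sqrt_inv, Real.sqrt_eq_rpow, Real.rpow_neg_eq_inv_rpow]
  rw [hpow, iteratedDeriv_eq_iterate, Real.iter_deriv_rpow_const, descPochhammer_eval_eq_prod_range]
  norm_num [Finset.prod_range_succ]

/-- The squared mutual distance `|Q₁Q₃|² = |Q₁Q₄|²`, divided by `r²`, in the isosceles
configuration `θ = π/2`. -/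
noncomputable def isoscelesDistSq (M₀ M₁ ψ : ℝ) : ℝ :=
  Real.sin ψ ^ 2 / M₁ + Real.cos ψ ^ 2 / (4 * M₀)

/-- The rescaled potential `r·V` of the three-body problem with two unit masses and a third mass
`m`, in polar blowup variables, for arbitrary reduced masses `M₀` and `M₁`. -/
noncomputable def rescaledPotential (m M₀ M₁ ψ θ : ℝ) : ℝ :=
  -(∑ i ∈ Finset.range 2, m / √(isoscelesDistSq M₀ M₁ ψ +
      (-1 : ℝ) ^ i * (Real.sin ψ * Real.cos ψ / √(M₀ * M₁)) * Real.cos θ)) -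
    √M₀ / Real.cos ψ

theorem isoscelesDistSq_pos {M₀ M₁ : ℝ} (hM₀ : 0 < M₀) (hM₁ : 0 < M₁) (ψ : ℝ) :
    0 < isoscelesDistSq M₀ M₁ ψ := by
  unfold isoscelesDistSq
  rcases eq_or_ne (Real.sin ψ) 0 with hsin | hsin
  · have hcos : Real.cos ψ ^ 2 = 1 := by simpa [hsin] using Real.sin_sq_add_cos_sq ψ
    rw [hcos]
    positivity
  · positivity

theorem rescaledPotential_pi_sub (m M₀ M₁ ψ θ : ℝ) :
    rescaledPotential m M₀ M₁ ψ (Real.pi - θ) = rescaledPotential m M₀ M₁ ψ θ := by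
  simp [rescaledPotential, Finset.sum_range_succ, add_comm]

theorem deriv_rescaledPotential_pi_div_two (m M₀ M₁ ψ : ℝ) :
    deriv (rescaledPotential m M₀ M₁ ψ) (Real.pi / 2) = 0 :=
  deriv_eq_zero_of_forall_sub_eq fun θ => by rw [add_halves, rescaledPotential_pi_sub]

theorem deriv_deriv_rescaledPotential_pi_div_two (m : ℝ) {M₀ M₁ : ℝ} (hM₀ : 0 < M₀)
    (hM₁ : 0 < M₁) (ψ : ℝ) :
    deriv (deriv (rescaledPotential m M₀ M₁ ψ)) (Real.pi / 2) =
      -(3 * m / 2) * (1 / (M₁ * M₀)) * Real.sin ψ ^ 2 * Real.cos ψ ^ 2 /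
        isoscelesDistSq M₀ M₁ ψ ^ ((5 : ℝ) / 2) := by
  set A := isoscelesDistSq M₀ M₁ ψ
  set B := Real.sin ψ * Real.cos ψ / √(M₀ * M₁)
  have hA : 0 < A := isoscelesDistSq_pos hM₀ hM₁ ψ
  have hg : ContDiffAt ℝ 2 (fun y => m / √y) A :=
    contDiffAt_const.div (Real.contDiffAt_sqrt hA.ne') (Real.sqrt_ne_zero'.mpr hA)
  have hg₂ : iteratedDeriv 2 (fun y => m / √y) A = m * (3 / 4 * A ^ (-(5 / 2) : ℝ)) := by
    simp only [div_eq_mul_inv m, iteratedDeriv_const_mul_field, iteratedDeriv_two_inv_sqrt]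
  have hsplit : rescaledPotential m M₀ M₁ ψ = fun θ => -(√M₀ / Real.cos ψ) +
      -∑ i ∈ Finset.range 2, m / √(A + (-1 : ℝ) ^ i * B * Real.cos θ) := by
    ext θ
    exact (neg_add_eq_sub _ _).symm
  calc deriv (deriv (rescaledPotential m M₀ M₁ ψ)) (Real.pi / 2)
      = iteratedDeriv 2 (rescaledPotential m M₀ M₁ ψ) (Real.pi / 2) := by
        rw [iteratedDeriv_eq_iterate]; rfl
    _ = -((∑ i ∈ Finset.range 2, ((-1 : ℝ) ^ i * B) ^ 2) *
          iteratedDeriv 2 (fun y => m / √y) A) := by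
        rw [hsplit, iteratedDeriv_const_add two_pos, iteratedDeriv_fun_neg,
          iteratedDeriv_two_sum_comp_add_mul_cos _ hg]
    _ = -(3 * m / 2) * B ^ 2 * A ^ (-(5 / 2) : ℝ) := by
        rw [hg₂, Finset.sum_range_succ, Finset.sum_range_one]
        ring
    _ = _ := by
        rw [div_pow, Real.sq_sqrt (by positivity), Real.rpow_neg hA.le]
        ring

theorem deriv_deriv_rescaledPotential_pi_div_two_neg {m M₀ M₁ ψ : ℝ} (hm : 0 < m) (hM₀ : 0 < M₀)
    (hM₁ : 0 < M₁) (hsin : Real.sin ψ ≠ 0) (hcos : Real.cos ψ ≠ 0) :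
    deriv (deriv (rescaledPotential m M₀ M₁ ψ)) (Real.pi / 2) < 0 := by
  have hA := isoscelesDistSq_pos hM₀ hM₁ ψ
  rw [deriv_deriv_rescaledPotential_pi_div_two m hM₀ hM₁ ψ, neg_mul, neg_mul, neg_mul, neg_div,
    neg_lt_zero]
  positivity

theorem statement18_general {m M₀ M₁ ψ : ℝ} (hm : 0 < m) (hM₀ : 0 < M₀) (hM₁ : 0 < M₁)
    (hsin : Real.sin ψ ≠ 0) (hcos : Real.cos ψ ≠ 0) :
    deriv (rescaledPotential m M₀ M₁ ψ) (Real.pi / 2) = 0 ∧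
    deriv (deriv (rescaledPotential m M₀ M₁ ψ)) (Real.pi / 2) =
      -(3 * m / 2) * (1 / (M₁ * M₀)) * Real.sin ψ ^ 2 * Real.cos ψ ^ 2 /
        ((1 / M₁) * Real.sin ψ ^ 2 + Real.cos ψ ^ 2 / (4 * M₀)) ^ ((5 : ℝ) / 2) ∧
    deriv (deriv (rescaledPotential m M₀ M₁ ψ)) (Real.pi / 2) < 0 := by
  refine ⟨deriv_rescaledPotential_pi_div_two m M₀ M₁ ψ, ?_,
    deriv_deriv_rescaledPotential_pi_div_two_neg hm hM₀ hM₁ hsin hcos⟩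
  rw [deriv_deriv_rescaledPotential_pi_div_two m hM₀ hM₁ ψ, isoscelesDistSq, one_div_mul_eq_div]

/-- The rescaled potential `r·V` of the three-body problem in Jacobi–polar blowup variables,
as a function of the relative polar angle `θ = θ₀ − θ₁`: its first `θ`-derivative vanishes
at the isosceles configuration `θ = π/2`, and its second `θ`-derivative there is strictly
negative, with the stated explicit value. -/
theorem statement18 (m : ℝ) (hm : 0 < m) (ψ : ℝ) (hψ : ψ ∈ Set.Ioo 0 (Real.pi/2)) :
    let M0 : ℝ := 1/2
    let M1 : ℝ := 2*m/(m+2)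
    let F : ℝ → ℝ := fun θ =>
      -(∑ i ∈ Finset.range 2,
          m / Real.sqrt (Real.sin ψ^2/M1 + Real.cos ψ^2/(4*M0)
            + (-1:ℝ)^i * (Real.sin ψ * Real.cos ψ / Real.sqrt (M0*M1)) * Real.cos θ))
        - Real.sqrt M0 / Real.cos ψ
    deriv F (Real.pi/2) = 0 ∧
    deriv (deriv F) (Real.pi/2)
      = -(3*m/2) * (1/(M1*M0)) * Real.sin ψ^2 * Real.cos ψ^2 /
          ((1/M1)*Real.sin ψ^2 + Real.cos ψ^2/(4*M0)) ^ ((5:ℝ)/2) ∧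
    deriv (deriv F) (Real.pi/2) < 0 := by
  have hsin : 0 < Real.sin ψ := Real.sin_pos_of_mem_Ioo ⟨hψ.1, by linarith [hψ.1, hψ.2]⟩
  have hcos : 0 < Real.cos ψ := Real.cos_pos_of_mem_Ioo ⟨by linarith [hψ.1, hψ.2], hψ.2⟩
  exact statement18_general hm one_half_pos (by positivity) hsin.ne' hcos.ne'
end
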